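/- Let 𝒫 be a generalized perimeter, L > 0, R > 0, E₀ ∈ 𝔠_L ∩ 𝔐_R, and 0 < h < 1. Let {E^{(h)}_t}_{t ≥ 0} be the approximate flat solution with initial datum E₀ and time step h. Then there exists a constant C > 0, depending only on d, L and 𝒫(E₀), such that |E^{(h)}_t Δ E^{(h)}_s| ≤ C max{h^{1/2}, |t−s|^{1/2}} for every s, t ≥ 0. -/

import Mathlib

open MeasureTheory Filter Set
open scoped ENNReal

noncomputable section

/-- The flat torus `𝕋^{d-1}`. -/
abbrev Torus (d : ℕ) : Type := Fin (d-1) → AddCircle (1:ℝ)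

/-- The periodic strip `𝕋^{d-1} × ℝ`. -/
abbrev Cyl (d : ℕ) : Type := Torus d × ℝ

/-- The subgraph of a function `g : 𝕋^{d-1} → ℝ`. -/
def subgraph (d : ℕ) (g : Torus d → ℝ) : Set (Cyl d) := {x | x.2 ≤ g x.1}

/-- The class `𝔠_L` of periodic `L`-Lipschitz subgraphs. -/
def LipClass (d : ℕ) (L : ℝ) : Set (Set (Cyl d)) :=
  {E | ∃ g : Torus d → ℝ, LipschitzWith (Real.toNNReal L) g ∧ E = subgraph d g}

/-- The slab `𝕊^d_R = 𝕋^{d-1} × (-R, R)`. -/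
def SlabR (d : ℕ) (R : ℝ) : Set (Cyl d) := {x | -R < x.2 ∧ x.2 < R}

/-- The class `𝔐_R` of measurable sets squeezed between two halfspaces. -/
def MR (d : ℕ) (R : ℝ) : Set (Set (Cyl d)) :=
  {E | MeasurableSet E ∧ {x : Cyl d | x.2 < -R} ⊆ E ∧ E ⊆ {x : Cyl d | x.2 < R}}

/-- The periodic halfspace `H_λ = 𝕋^{d-1} × (-∞, λ)`. -/
def halfspace (d : ℕ) (lam : ℝ) : Set (Cyl d) := {x | x.2 < lam}

/-- Translation of `𝕋^{d-1} × ℝ` by a vector `τ ∈ ℝ^d = ℝ^{d-1} × ℝ`,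
acting through the quotient. -/
def translCyl (d : ℕ) (τ : (Fin (d-1) → ℝ) × ℝ) (x : Cyl d) : Cyl d :=
  (fun i => x.1 i + (τ.1 i : AddCircle (1:ℝ)), x.2 + τ.2)

/-- A generalized perimeter: a functional `𝒫 : 𝔐 → [0,+∞]` satisfying properties
(i)-(vi) of Definition 1.2. -/
structure GenPerimeter (d : ℕ) where
  P : Set (Cyl d) → ℝ≥0∞
  /-- (i) finiteness on periodic Lipschitz subgraphs -/
  lip_finite : ∀ L : ℝ, 0 < L → ∀ E ∈ LipClass d L, P E < ⊤
  /-- (ii) `𝒫(∅) = 0` -/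
  empty_eq : P ∅ = 0
  /-- (ii) `𝒫(𝕋^{d-1} × ℝ) = 0` -/
  univ_eq : P Set.univ = 0
  /-- (iii) invariance under modifications on null sets -/
  congr_ae : ∀ E E' : Set (Cyl d), volume (symmDiff E E') = 0 → P E = P E'
  /-- (iv) lower semicontinuity w.r.t. local `L¹` convergence -/
  lsc : ∀ (En : ℕ → Set (Cyl d)) (E : Set (Cyl d)),
      (∀ R : ℝ, 0 < R →
        Tendsto (fun n => volume (symmDiff (En n) E ∩ SlabR d R)) atTop (nhds 0)) →
      P E ≤ liminf (fun n => P (En n)) atTop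
  /-- (v) submodularity -/
  submodular : ∀ E F : Set (Cyl d), P (E ∪ F) + P (E ∩ F) ≤ P E + P F
  /-- (vi) translational invariance -/
  transl_inv : ∀ (E : Set (Cyl d)) (τ : (Fin (d-1) → ℝ) × ℝ), P (translCyl d τ '' E) = P E

/-- Signed distance from a set `E`. -/
def sdist (d : ℕ) (E : Set (Cyl d)) (x : Cyl d) : ℝ :=
  Metric.infDist x E - Metric.infDist x Eᶜ

/-- The incremental functional `𝓕̃_h(E, F) = 𝒫(F) + (1/h) ∫_{F ∩ 𝕊^d_R} sdist_E`. -/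
def Ftilde (d : ℕ) (P : GenPerimeter d) (R h : ℝ) (E F : Set (Cyl d)) : EReal :=
  (P.P F : EReal) + (((1/h) * ∫ x in F ∩ SlabR d R, sdist d E x) : ℝ)

/-- `F` minimizes `𝓕̃_h(E, ·)` in `𝔐_R`. -/
def IsMinimizer (d : ℕ) (P : GenPerimeter d) (R h : ℝ) (E F : Set (Cyl d)) : Prop :=
  F ∈ MR d R ∧ ∀ F' ∈ MR d R, Ftilde d P R h E F ≤ Ftilde d P R h E F'

/-- The discrete-in-time approximate flat solution with time step `h`, initial datum `E₀`:
`Eh k` is the set at time `k h`; each step is the (unique, Lipschitz-subgraph) minimizer of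
the incremental problem. -/
def IsApproxFlow (d : ℕ) (P : GenPerimeter d) (L R h : ℝ) (E₀ : Set (Cyl d))
    (Eh : ℕ → Set (Cyl d)) : Prop :=
  Eh 0 = E₀ ∧ ∀ k : ℕ, Eh (k+1) ∈ LipClass d L ∧ IsMinimizer d P R h (Eh k) (Eh (k+1))

lemma aux_sdist_cont (d : ℕ) (E : Set (Cyl d)) : Continuous (sdist d E) :=
  (Metric.continuous_infDist_pt E).sub (Metric.continuous_infDist_pt Eᶜ)

lemma aux_slab_meas (d : ℕ) (R : ℝ) : MeasurableSet (SlabR d R) := by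
  have : SlabR d R = Prod.snd ⁻¹' (Ioo (-R) R) := by ext x; simp [SlabR]
  rw [this]
  exact measurable_snd measurableSet_Ioo

lemma aux_intOn (d : ℕ) (E : Set (Cyl d)) (R : ℝ) :
    IntegrableOn (sdist d E) (SlabR d R) := by
  have hK : IsCompact ((univ : Set (Torus d)) ×ˢ (Icc (-R) R)) := isCompact_univ.prod isCompact_Icc
  refine ((aux_sdist_cont d E).continuousOn.integrableOn_compact hK).mono_set ?_
  rintro x ⟨h1, h2⟩
  exact ⟨mem_univ _, h1.le, h2.le⟩

lemma aux_symm_fin (d : ℕ) (R : ℝ) (E F : Set (Cyl d)) (hE : E ∈ MR d R) (hF : F ∈ MR d R) :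
    volume (symmDiff E F) ≠ ⊤ := by
  have hK : IsCompact ((univ : Set (Torus d)) ×ˢ (Icc (-R) R)) := isCompact_univ.prod isCompact_Icc
  refine ne_top_of_le_ne_top hK.measure_lt_top.ne (measure_mono ?_)
  obtain ⟨-, hE1, hE2⟩ := hE
  obtain ⟨-, hF1, hF2⟩ := hF
  rintro x (⟨h1, h2⟩ | ⟨h1, h2⟩)
  · exact ⟨mem_univ _, not_lt.1 fun h => h2 (hF1 h), (hE2 h1).le⟩
  · exact ⟨mem_univ _, not_lt.1 fun h => h2 (hE1 h), (hF2 h1).le⟩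

lemma aux_infDist1 (d : ℕ) (L : ℝ) (hL : 0 < L) (g : Torus d → ℝ)
    (hg : LipschitzWith (Real.toNNReal L) g) (x : Cyl d) (hx : x ∉ subgraph d g) :
    x.2 - g x.1 ≤ (1 + L) * Metric.infDist x (subgraph d g) := by
  have hne : (subgraph d g).Nonempty := ⟨(x.1, g x.1), le_refl (g x.1)⟩
  rw [← div_le_iff₀' (by linarith), Metric.le_infDist hne]
  intro y hy
  rw [div_le_iff₀' (by linarith)]
  have h1 : dist x.1 y.1 ≤ dist x y := le_max_left _ _
  have h2 : dist x.2 y.2 ≤ dist x y := le_max_right _ _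
  have h3 := hg.dist_le_mul y.1 x.1
  rw [Real.coe_toNNReal L hL.le, dist_comm y.1] at h3
  rw [Real.dist_eq] at h2 h3
  have hy' : y.2 ≤ g y.1 := hy
  have := (abs_le.1 h3).2
  have := (abs_le.1 h2).2
  nlinarith

lemma aux_infDist2 (d : ℕ) (L : ℝ) (hL : 0 < L) (g : Torus d → ℝ)
    (hg : LipschitzWith (Real.toNNReal L) g) (x : Cyl d) (hx : x ∈ subgraph d g) :
    g x.1 - x.2 ≤ (1 + L) * Metric.infDist x (subgraph d g)ᶜ := by
  have hne : ((subgraph d g)ᶜ).Nonempty :=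
    ⟨(x.1, g x.1 + 1), fun h => by
      have : g x.1 + 1 ≤ g x.1 := h
      linarith⟩
  rw [← div_le_iff₀' (by linarith), Metric.le_infDist hne]
  intro y hy
  rw [div_le_iff₀' (by linarith)]
  have h1 : dist x.1 y.1 ≤ dist x y := le_max_left _ _
  have h2 : dist x.2 y.2 ≤ dist x y := le_max_right _ _
  have h3 := hg.dist_le_mul y.1 x.1
  rw [Real.coe_toNNReal L hL.le, dist_comm y.1] at h3
  rw [Real.dist_eq] at h2 h3
  have hy' : g y.1 < y.2 := not_le.1 hy
  have := (abs_le.1 h3).1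
  have := (abs_le.1 h2).1
  nlinarith

lemma aux_abs_le (d : ℕ) (L : ℝ) (hL : 0 < L) (g : Torus d → ℝ)
    (hg : LipschitzWith (Real.toNNReal L) g) (x : Cyl d) :
    |x.2 - g x.1| ≤ (1 + L) * |sdist d (subgraph d g) x| := by
  by_cases hx : x ∈ subgraph d g
  · have h := aux_infDist2 d L hL g hg x hx
    have h0 : x.2 ≤ g x.1 := hx
    rw [sdist, Metric.infDist_zero_of_mem hx, zero_sub, abs_neg, abs_of_nonneg Metric.infDist_nonneg,
      abs_of_nonpos (by linarith)]
    linarith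
  · have h := aux_infDist1 d L hL g hg x hx
    have h0 : g x.1 < x.2 := not_le.1 hx
    rw [sdist, Metric.infDist_zero_of_mem (show x ∈ (subgraph d g)ᶜ from hx), sub_zero,
      abs_of_nonneg Metric.infDist_nonneg, abs_of_nonneg (by linarith)]
    exact h

lemma aux_band (d : ℕ) (g : Torus d → ℝ) (hg : Continuous g) (r : ℝ) :
    volume {x : Cyl d | |x.2 - g x.1| ≤ r} ≤ ENNReal.ofReal (2 * r) := by
  have hm : MeasurableSet {x : Cyl d | |x.2 - g x.1| ≤ r} := by
    apply IsClosed.measurableSet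
    exact isClosed_le (by fun_prop) (by fun_prop)
  rw [Measure.volume_eq_prod, Measure.prod_apply hm]
  have : ∀ y : Torus d, volume (Prod.mk y ⁻¹' {x : Cyl d | |x.2 - g x.1| ≤ r})
      = ENNReal.ofReal (2 * r) := by
    intro y
    have : (Prod.mk y ⁻¹' {x : Cyl d | |x.2 - g x.1| ≤ r}) = Icc (g y - r) (g y + r) := by
      ext z
      simp only [mem_preimage, mem_setOf_eq, mem_Icc, abs_le]
      constructor <;> rintro ⟨h1, h2⟩ <;> constructor <;> linarith
    rw [this, Real.volume_Icc]
    congr 1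
    ring
  simp only [this, lintegral_const]
  have : volume (univ : Set (Torus d)) = 1 := by
    rw [volume_pi, ← Set.pi_univ univ, Measure.pi_pi]
    simp [AddCircle.measure_univ]
  rw [this, mul_one]

lemma aux_line (d : ℕ) (c : ℝ) : volume {x : Cyl d | x.2 = c} = 0 := by
  have := aux_band d (fun _ => c) continuous_const 0
  simpa [sub_eq_zero] using this

lemma aux_step (d : ℕ) (L R : ℝ) (hL : 0 < L) (g : Torus d → ℝ)
    (hg : LipschitzWith (Real.toNNReal L) g) (E F : Set (Cyl d)) (hEg : E = subgraph d g)
    (hE : E ∈ MR d R) (hF : F ∈ MR d R) :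
    (volume (symmDiff F E)).toReal ^ 2 ≤
      8 * (1 + L) * ((∫ x in F ∩ SlabR d R, sdist d E x) - ∫ x in E ∩ SlabR d R, sdist d E x) := by
  set f : Cyl d → ℝ := (symmDiff F E).indicator (fun x => |sdist d E x|) with hf
  have hmE := hE.1
  have hmF := hF.1
  have hint := aux_intOn d E R
  have hI : (∫ x in F ∩ SlabR d R, sdist d E x) - (∫ x in E ∩ SlabR d R, sdist d E x)
      = ∫ x in SlabR d R, f x := by
    rw [inter_comm F, inter_comm E, ← setIntegral_indicator hmF, ← setIntegral_indicator hmE,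
      ← integral_sub (hint.indicator hmF) (hint.indicator hmE)]
    congr 1
    ext x
    by_cases h1 : x ∈ E <;> by_cases h2 : x ∈ F <;>
      simp [hf, indicator, mem_symmDiff, h1, h2]
    · rw [sdist, Metric.infDist_zero_of_mem h1, zero_sub, abs_neg, neg_neg,
        abs_of_nonneg Metric.infDist_nonneg]
    · rw [sdist, Metric.infDist_zero_of_mem (show x ∈ Eᶜ from h1), sub_zero,
        abs_of_nonneg Metric.infDist_nonneg]
  rw [hI]
  set I := ∫ x in SlabR d R, f x
  have hfi : Integrable f (volume.restrict (SlabR d R)) :=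
    hint.abs.indicator (hmF.symmDiff hmE)
  have hf0 : ∀ x, 0 ≤ f x := fun x => indicator_nonneg (fun _ _ => abs_nonneg _) x
  set V := (volume (symmDiff F E)).toReal with hV
  have key : ∀ ε : ℝ, 0 < ε → V ≤ 2 * (1 + L) * ε + I / ε := by
    intro ε hε
    have hmk := mul_meas_ge_le_integral_of_nonneg (Eventually.of_forall hf0) hfi ε
    have hsub : symmDiff F E ⊆ ({x : Cyl d | x.2 = -R} ∪ {x : Cyl d | |x.2 - g x.1| ≤ (1 + L) * ε})
        ∪ ({x | ε ≤ f x} ∩ SlabR d R) := by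
      intro x hx
      by_cases hs : |x.2 - g x.1| ≤ (1 + L) * ε
      · exact Or.inl (Or.inr hs)
      by_cases hR : x.2 = -R
      · exact Or.inl (Or.inl hR)
      right
      refine ⟨?_, ?_⟩
      · show ε ≤ f x
        rw [hf, indicator_of_mem hx]
        have := aux_abs_le d L hL g hg x
        rw [← hEg] at this
        have h2 := (not_le.1 hs).trans_le this
        exact (lt_of_mul_lt_mul_left h2 (by linarith)).le
      · have hge : -R ≤ x.2 := by
          rcases hx with ⟨h1, h2⟩ | ⟨h1, h2⟩
          · exact not_lt.1 fun h => h2 (hE.2.1 h)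
          · exact not_lt.1 fun h => h2 (hF.2.1 h)
        have hlt : x.2 < R := by
          rcases hx with ⟨h1, h2⟩ | ⟨h1, h2⟩
          · exact hF.2.2 h1
          · exact hE.2.2 h1
        exact ⟨lt_of_le_of_ne hge (Ne.symm hR), hlt⟩
    have hfin : volume ({x | ε ≤ f x} ∩ SlabR d R) ≠ ⊤ := by
      refine ne_top_of_le_ne_top (aux_symm_fin d R F E hF hE) (measure_mono ?_)
      rintro x ⟨hx, -⟩
      by_contra hn
      have hx' : ε ≤ f x := hx
      rw [hf, indicator_of_notMem hn] at hx'
      linarith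
    have h3 : volume (symmDiff F E) ≤ ENNReal.ofReal (2 * ((1 + L) * ε)) +
        volume ({x | ε ≤ f x} ∩ SlabR d R) := by
      refine (measure_mono hsub).trans ((measure_union_le _ _).trans ?_)
      gcongr
      refine (measure_union_le _ _).trans ?_
      rw [aux_line, zero_add]
      exact aux_band d g hg.continuous _
    have h4 := ENNReal.toReal_mono (ENNReal.add_ne_top.2 ⟨ENNReal.ofReal_ne_top, hfin⟩) h3
    rw [ENNReal.toReal_add ENNReal.ofReal_ne_top hfin, ENNReal.toReal_ofReal (by positivity)] at h4
    rw [measureReal_def, Measure.restrict_apply' (aux_slab_meas d R)] at hmk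
    have h5 : (volume ({x | ε ≤ f x} ∩ SlabR d R)).toReal ≤ I / ε := by
      rw [le_div_iff₀' hε]; exact hmk
    linarith
  have hI0 : 0 ≤ I := integral_nonneg hf0
  have hV0 : 0 ≤ V := ENNReal.toReal_nonneg
  rcases hV0.eq_or_lt with h | h
  · rw [← h, zero_pow two_ne_zero]; positivity
  · have := key (V / (4 * (1 + L))) (by positivity)
    have e1 : 2 * (1 + L) * (V / (4 * (1 + L))) = V / 2 := by field_simp; norm_num
    have e2 : I / (V / (4 * (1 + L))) = 4 * (1 + L) * I / V := by field_simp
    rw [e1, e2] at this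
    have h6 : V / 2 ≤ 4 * (1 + L) * I / V := by linarith
    rw [le_div_iff₀ h] at h6
    nlinarith

lemma aux_energy (d : ℕ) (P : GenPerimeter d) (R h : ℝ) (hh : 0 < h) (E F : Set (Cyl d))
    (hE : P.P E ≠ ⊤) (hF : P.P F ≠ ⊤) (hle : Ftilde d P R h E F ≤ Ftilde d P R h E E) :
    (∫ x in F ∩ SlabR d R, sdist d E x) - (∫ x in E ∩ SlabR d R, sdist d E x)
      ≤ h * ((P.P E).toReal - (P.P F).toReal) := by
  unfold Ftilde at hle
  rw [← EReal.coe_ennreal_toReal hE, ← EReal.coe_ennreal_toReal hF, ← EReal.coe_add,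
    ← EReal.coe_add, EReal.coe_le_coe_iff] at hle
  set A := ∫ x in F ∩ SlabR d R, sdist d E x
  set B := ∫ x in E ∩ SlabR d R, sdist d E x
  have h1 : 1 / h * (A - B) ≤ (P.P E).toReal - (P.P F).toReal := by linarith
  rw [one_div, inv_mul_le_iff₀ hh] at h1
  exact h1

lemma aux_tri (d : ℕ) (R : ℝ) (Eh : ℕ → Set (Cyl d)) (hM : ∀ k, Eh k ∈ MR d R) (m j : ℕ) :
    (volume (symmDiff (Eh (m + j)) (Eh m))).toReal ≤
      ∑ i ∈ Finset.range j, (volume (symmDiff (Eh (m + i + 1)) (Eh (m + i)))).toReal := by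
  induction j with
  | zero => simp
  | succ j ih =>
    rw [Finset.sum_range_succ]
    have h1 := aux_symm_fin d R _ _ (hM (m + j + 1)) (hM (m + j))
    have h2 := aux_symm_fin d R _ _ (hM (m + j)) (hM m)
    have h3 : volume (symmDiff (Eh (m + j + 1)) (Eh m)) ≤
        volume (symmDiff (Eh (m + j + 1)) (Eh (m + j))) + volume (symmDiff (Eh (m + j)) (Eh m)) :=
      (measure_mono (symmDiff_triangle _ _ _)).trans (measure_union_le _ _)
    have h4 := ENNReal.toReal_mono (ENNReal.add_ne_top.2 ⟨h1, h2⟩) h3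
    rw [ENNReal.toReal_add h1 h2] at h4
    rw [← add_assoc]
    linarith

lemma aux_floor (h s t : ℝ) (hh : 0 < h) (hs : 0 ≤ s) (m j : ℕ) (hm : ⌊s / h⌋₊ = m)
    (ht : 0 ≤ t) (hn : ⌊t / h⌋₊ = m + j) : j * h ≤ 2 * max h |t - s| := by
  have h1 : s / h < m + 1 := by rw [← hm]; exact Nat.lt_floor_add_one _
  have h2 : ((m + j : ℕ) : ℝ) ≤ t / h := by rw [← hn]; exact Nat.floor_le (by positivity)
  rw [div_lt_iff₀ hh] at h1
  rw [le_div_iff₀ hh] at h2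
  push_cast at h2
  have := le_max_left h |t - s|
  have := le_max_right h |t - s|
  have := le_abs_self (t - s)
  nlinarith

/-- Discrete Hölder continuity in time of the approximate flat solutions, with a constant
depending only on `d`, `L` and `𝒫(E₀)`. -/
theorem approxFlow_holder (d : ℕ) (hd : 2 ≤ d) (L : ℝ) (hL : 0 < L) :
    ∃ C : ℝ≥0∞ → ℝ,
      ∀ (P : GenPerimeter d) (R h : ℝ), 0 < R → 0 < h → h < 1 →
      ∀ E₀ ∈ LipClass d L ∩ MR d R, ∀ Eh : ℕ → Set (Cyl d),
        IsApproxFlow d P L R h E₀ Eh →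
        0 < C (P.P E₀) ∧
        ∀ s t : ℝ, 0 ≤ s → 0 ≤ t →
          (volume (symmDiff (Eh ⌊t / h⌋₊) (Eh ⌊s / h⌋₊))).toReal
            ≤ C (P.P E₀) * max (h ^ (1/2 : ℝ)) (|t - s| ^ (1/2 : ℝ)) := by
  refine ⟨fun p => Real.sqrt (16 * (1 + L) * p.toReal) + 1, ?_⟩
  intro P R h hR hh hh1 E₀ hE₀ Eh ⟨h0, hstep⟩
  refine ⟨by positivity, ?_⟩
  have hM : ∀ k, Eh k ∈ MR d R := by
    intro k
    cases k with
    | zero => rw [h0]; exact hE₀.2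
    | succ k => exact (hstep k).2.1
  have hLip : ∀ k, Eh k ∈ LipClass d L := by
    intro k
    cases k with
    | zero => rw [h0]; exact hE₀.1
    | succ k => exact (hstep k).1
  have hfin : ∀ k, P.P (Eh k) ≠ ⊤ := fun k => (P.lip_finite L hL _ (hLip k)).ne
  have hone : ∀ k, (volume (symmDiff (Eh (k + 1)) (Eh k))).toReal ^ 2 ≤
      8 * (1 + L) * h * ((P.P (Eh k)).toReal - (P.P (Eh (k + 1))).toReal) := by
    intro k
    obtain ⟨g, hg, hEg⟩ := hLip k
    have h1 := aux_step d L R hL g hg _ _ hEg (hM k) (hM (k + 1))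
    have h2 := aux_energy d P R h hh _ _ (hfin k) (hfin (k + 1)) ((hstep k).2.2 _ (hM k))
    have h3 := mul_le_mul_of_nonneg_left h2 (show 0 ≤ 8 * (1 + L) by positivity)
    linarith
  have hanti : Antitone fun k => (P.P (Eh k)).toReal := by
    apply antitone_nat_of_succ_le
    intro k
    have h1 := (sq_nonneg _).trans (hone k)
    have h2 := nonneg_of_mul_nonneg_right h1 (show 0 < 8 * (1 + L) * h by positivity)
    linarith
  have hmj : ∀ m j : ℕ, (volume (symmDiff (Eh (m + j)) (Eh m))).toReal ^ 2 ≤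
      8 * (1 + L) * (j * h) * (P.P E₀).toReal := by
    intro m j
    have h1 := aux_tri d R Eh hM m j
    have h2 := pow_le_pow_left₀ ENNReal.toReal_nonneg h1 2
    have h3 := sq_sum_le_card_mul_sum_sq (s := Finset.range j)
      (f := fun i => (volume (symmDiff (Eh (m + i + 1)) (Eh (m + i)))).toReal)
    rw [Finset.card_range] at h3
    have h4 : ∑ i ∈ Finset.range j, (volume (symmDiff (Eh (m + i + 1)) (Eh (m + i)))).toReal ^ 2
        ≤ 8 * (1 + L) * h * (P.P E₀).toReal := by
      refine (Finset.sum_le_sum fun i _ => hone (m + i)).trans ?_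
      rw [← Finset.mul_sum]
      have h5 := Finset.sum_range_sub' (fun i => (P.P (Eh (m + i))).toReal) j
      have h6 : ∑ i ∈ Finset.range j,
          ((P.P (Eh (m + i))).toReal - (P.P (Eh (m + i + 1))).toReal)
          = (P.P (Eh (m + 0))).toReal - (P.P (Eh (m + j))).toReal := h5
      rw [h6]
      have h7 : (P.P (Eh (m + 0))).toReal ≤ (P.P (Eh 0)).toReal := hanti (Nat.zero_le _)
      rw [h0] at h7
      have h8 : 0 ≤ (P.P (Eh (m + j))).toReal := ENNReal.toReal_nonneg
      gcongr
      linarith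
    have h9 := mul_le_mul_of_nonneg_left h4 (Nat.cast_nonneg (α := ℝ) j)
    linarith
  have main : ∀ s t : ℝ, 0 ≤ s → 0 ≤ t → ⌊s / h⌋₊ ≤ ⌊t / h⌋₊ →
      (volume (symmDiff (Eh ⌊t / h⌋₊) (Eh ⌊s / h⌋₊))).toReal
        ≤ (Real.sqrt (16 * (1 + L) * (P.P E₀).toReal) + 1)
          * max (h ^ (1/2 : ℝ)) (|t - s| ^ (1/2 : ℝ)) := by
    intro s t hs ht hst
    obtain ⟨j, hj⟩ := Nat.exists_eq_add_of_le hst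
    have h1 := aux_floor h s t hh hs _ j rfl ht hj
    have h2 := hmj ⌊s / h⌋₊ j
    rw [← hj] at h2
    have hmax : max (h ^ (1/2 : ℝ)) (|t - s| ^ (1/2 : ℝ)) = Real.sqrt (max h |t - s|) := by
      rw [← Real.sqrt_eq_rpow, ← Real.sqrt_eq_rpow]
      exact ((Real.sqrt_monotone).map_max).symm
    rw [hmax]
    have hp : 0 ≤ (P.P E₀).toReal := ENNReal.toReal_nonneg
    have h3 : (volume (symmDiff (Eh ⌊t / h⌋₊) (Eh ⌊s / h⌋₊))).toReal
        ≤ Real.sqrt (16 * (1 + L) * (P.P E₀).toReal * max h |t - s|) := by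
      apply Real.le_sqrt_of_sq_le
      refine h2.trans ?_
      have h4 := mul_le_mul_of_nonneg_left h1
        (show 0 ≤ 8 * (1 + L) * (P.P E₀).toReal by positivity)
      linarith
    rw [Real.sqrt_mul (by positivity)] at h3
    have h5 := Real.sqrt_nonneg (max h |t - s|)
    linarith
  intro s t hs ht
  rcases le_total ⌊s / h⌋₊ ⌊t / h⌋₊ with hle | hle
  · exact main s t hs ht hle
  · have := main t s ht hs hle
    rw [symmDiff_comm, abs_sub_comm] at this
    exact this
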